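/- arXiv:1102.1491 — 4 statements merged into one kernel-verified Lean document; each statement's English description precedes it below -/
import Mathlib

section
/- For all positive integers d, l, s such that d divides ls and 1 ≤ l < ls/d, there exists a directed strongly regular graph with parameters (v, k, t, λ, μ) = ((1 + ls/d)s, ls + s − 1, ld + s − 1, ld + s − 2, (l+1)d). -/
/-- A loopless directed graph (given by its adjacency relation `Adj` on the vertex
type `V`) is a *directed strongly regular graph* with parameters `(v, k, t, lam, mu)`:
the vertex set is finite of size `v`; every vertex has exactly `k` out-neighbors and
exactly `k` in-neighbors; every vertex has exactly `t` out-neighbors that are also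
in-neighbors; and for distinct vertices `x, y`, the number of directed paths of
length two from `x` to `y` is `lam` if `x → y` and `mu` otherwise. -/
def IsDSRG {V : Type} (Adj : V → V → Prop) (v k t lam mu : ℕ) : Prop :=
  Finite V ∧
  (∀ x : V, ¬ Adj x x) ∧
  Nat.card V = v ∧
  (∀ x : V, Nat.card {y : V // Adj x y} = k) ∧
  (∀ x : V, Nat.card {y : V // Adj y x} = k) ∧
  (∀ x : V, Nat.card {y : V // Adj x y ∧ Adj y x} = t) ∧
  (∀ x y : V, x ≠ y → Adj x y → Nat.card {z : V // Adj x z ∧ Adj z y} = lam) ∧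
  (∀ x y : V, x ≠ y → ¬ Adj x y → Nat.card {z : V // Adj x z ∧ Adj z y} = mu)

/-!
Lay `d` copies of an `m`-point set end to end as a sequence of `s * l = d * m` terms and cut it into
`s` windows of length `l`; since `l ≤ m` no window repeats a point, so the windows are the blocks of
a tactical configuration in which every point lies in `d` blocks. On `m + 1` points, copy this
configuration onto the complement of each point `p` and add `p` to every block: this gives `s`
blocks `B p a` through `p`, of size `l + 1`, such that any other point lies in exactly `d` of them.

Join `(p, a)` to `(q, b)` when `q ∈ B p a`. The two-step walks from `(p, a)` to `(q, b)` are counted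
by summing over `p' ∈ B p a` the number of blocks through `p'` that contain `q`: the summand is `s`
for `p' = q` and `d` otherwise, so the total is `l * d + s` or `(l + 1) * d` according as `(p, a)`
is joined to `(q, b)` or not. Deleting the loops only lowers the first count, by one or two.
-/

open Finset

section Reflexive

variable {V : Type} [Fintype V] {R : V → V → Prop} [DecidableRel R]

theorem isDSRG_of_reflexive {k n mu : ℕ} (hrefl : ∀ x, R x x)
    (hout : ∀ x, #{y | R x y} = k) (hin : ∀ x, #{y | R y x} = k)
    (hadj : ∀ x y, R x y → #{z | R x z ∧ R z y} = n)
    (hnonadj : ∀ x y, ¬ R x y → #{z | R x z ∧ R z y} = mu) :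
    IsDSRG (fun x y => R x y ∧ x ≠ y) (Fintype.card V) (k - 1) (n - 1) (n - 2) mu := by
  classical
  refine ⟨inferInstance, fun x h => h.2 rfl, Nat.card_eq_fintype_card, fun x => ?_, fun x => ?_,
    fun x => ?_, fun x y hne h => ?_, fun x y hne h => ?_⟩
  · rw [← hout x, ← card_erase_of_mem (a := x) (by simp [hrefl])]
    exact Nat.subtype_card _ (by grind)
  · rw [← hin x, ← card_erase_of_mem (a := x) (by simp [hrefl])]
    exact Nat.subtype_card _ (by grind)
  · rw [← hadj x x (hrefl x), ← card_erase_of_mem (a := x) (by simp [hrefl])]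
    exact Nat.subtype_card _ (by grind)
  · rw [← hadj x y h.1, ← Nat.sub_sub _ 1 1, ← card_erase_of_mem (a := x) (by simp [hrefl, h.1]),
      ← card_erase_of_mem (a := y) (by simp [hrefl, h.1, hne.symm])]
    exact Nat.subtype_card _ (by grind)
  · have hxy : ¬ R x y := fun hR => h ⟨hR, hne⟩
    rw [← hnonadj x y hxy]
    exact Nat.subtype_card _ (by grind)

end Reflexive

section TacticalConfiguration

variable {ι P : Type*} [Fintype ι] [DecidableEq P]

/-- A *tactical configuration*, given by its family of blocks: every block has `k` points and every
point lies in `r` blocks. Blocks are indexed, so that repeated blocks are counted with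
multiplicity. -/
structure IsTacticalConfiguration (B : ι → Finset P) (k r : ℕ) : Prop where
  card_block (a : ι) : #(B a) = k
  card_blocks_through (p : P) : #{a | p ∈ B a} = r

theorem isTacticalConfiguration_of_equiv {κ δ : Type*} [Fintype κ] [Fintype δ]
    (e : ι × κ ≃ δ × P) (he : ∀ a, Function.Injective fun i => (e (a, i)).2) :
    IsTacticalConfiguration (fun a => univ.image fun i => (e (a, i)).2)
      (Fintype.card κ) (Fintype.card δ) where
  card_block a := card_image_of_injective _ (he a)
  card_blocks_through p := by
    classical
    have hinj : Function.Injective fun q => (e.symm (q, p)).1 := by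
      intro q q' (hblock : (e.symm (q, p)).1 = (e.symm (q', p)).1)
      have hindex : (e.symm (q, p)).2 = (e.symm (q', p)).2 := by
        apply he (e.symm (q, p)).1
        conv_rhs => rw [hblock]
        simp
      exact congrArg Prod.fst (e.symm.injective (Prod.ext hblock hindex))
    have hblocks : ({a | p ∈ univ.image fun i => (e (a, i)).2} : Finset ι) =
        univ.image fun q => (e.symm (q, p)).1 := by
      ext a
      simp only [mem_filter, mem_univ, true_and, mem_image]
      constructor
      · rintro ⟨i, rfl⟩
        exact ⟨(e (a, i)).1, by simp⟩
      · rintro ⟨q, rfl⟩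
        exact ⟨(e.symm (q, p)).2, by simp⟩
    rw [hblocks, card_image_of_injective _ hinj, card_univ]

theorem exists_isTacticalConfiguration {s l d m : ℕ} (h : s * l = d * m) (hlm : l ≤ m) :
    ∃ B : Fin s → Finset (Fin m), IsTacticalConfiguration B l d := by
  let e : Fin s × Fin l ≃ Fin d × Fin m :=
    finProdFinEquiv.trans ((finCongr h).trans finProdFinEquiv.symm)
  have e_snd (a : Fin s) (i : Fin l) : ((e (a, i)).2 : ℕ) = (i + l * a) % m := rfl
  have he (a : Fin s) : Function.Injective fun i => (e (a, i)).2 := by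
    intro i j hij
    have hmod : (i + l * a : ℕ) ≡ j + l * a [MOD m] := by
      simpa only [e_snd, Nat.ModEq] using congrArg Fin.val hij
    exact Fin.ext <| (hmod.add_right_cancel' _).eq_of_lt_of_lt
      (i.is_lt.trans_le hlm) (j.is_lt.trans_le hlm)
  have hB := isTacticalConfiguration_of_equiv e he
  rw [Fintype.card_fin, Fintype.card_fin] at hB
  exact ⟨_, hB⟩

end TacticalConfiguration

section PointedBlockSystem

/-- A *pointed block system*: for every point `p`, a family `B p` of blocks through `p`, each with
`l` further points, such that every point other than `p` lies in exactly `d` of them. -/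
structure IsPointedBlockSystem {ι P : Type*} [Fintype ι] [DecidableEq P] (B : P → ι → Finset P)
    (l d : ℕ) : Prop where
  mem_block (p : P) (a : ι) : p ∈ B p a
  card_block (p : P) (a : ι) : #(B p a) = l + 1
  card_blocks_through {p q : P} (hpq : p ≠ q) : #{a | q ∈ B p a} = d

theorem IsTacticalConfiguration.isPointedBlockSystem {ι : Type*} [Fintype ι] {m l d : ℕ}
    {C : ι → Finset (Fin m)} (hC : IsTacticalConfiguration C l d) :
    IsPointedBlockSystem (fun (p : Fin (m + 1)) a => insert p ((C a).map p.succAboveEmb)) l d where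
  mem_block p a := mem_insert_self _ _
  card_block p a := by
    rw [card_insert_of_notMem (by simp), card_map, hC.card_block]
  card_blocks_through {p q} hpq := by
    obtain ⟨c, rfl⟩ := Fin.exists_succAbove_eq hpq.symm
    simpa [hpq.symm] using hC.card_blocks_through c

/-- The relation on pairs of a point and a block index in which `(p, a)` is related to all pairs
whose point lies in the block `B p a`. -/
abbrev BlockRel {ι P : Type*} (B : P → ι → Finset P) (x y : P × ι) : Prop :=
  y.1 ∈ B x.1 x.2

theorem card_blockRel_walks_eq_sum {ι P : Type*} [Fintype ι] [Fintype P] [DecidableEq P]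
    (B : P → ι → Finset P) (x y : P × ι) :
    #{z | BlockRel B x z ∧ BlockRel B z y} = ∑ p ∈ B x.1 x.2, #{a | y.1 ∈ B p a} := by
  simp only [card_filter, Fintype.sum_prod_type, BlockRel, ite_and]
  simp

namespace IsPointedBlockSystem

variable {ι P : Type*} [Fintype ι] [DecidableEq P] {B : P → ι → Finset P} {l d : ℕ}

theorem card_blocks_through_eq_ite (hB : IsPointedBlockSystem B l d) (p q : P) :
    #{a | q ∈ B p a} = if p = q then Fintype.card ι else d := by
  split_ifs with h
  · simp [h, hB.mem_block]
  · exact hB.card_blocks_through h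

theorem card_blocks_through_comm (hB : IsPointedBlockSystem B l d) (p q : P) :
    #{a | q ∈ B p a} = #{a | p ∈ B q a} := by
  simp only [hB.card_blocks_through_eq_ite, eq_comm]

variable [Fintype P]

theorem card_filter_blockRel_left (hB : IsPointedBlockSystem B l d) (x : P × ι) :
    #{y | BlockRel B x y} = (l + 1) * Fintype.card ι := by
  have hout : ({y | BlockRel B x y} : Finset (P × ι)) = B x.1 x.2 ×ˢ univ := by
    ext
    simp [BlockRel]
  rw [hout, card_product, hB.card_block, card_univ]

theorem card_filter_blockRel_right (hB : IsPointedBlockSystem B l d) (y : P × ι) :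
    #{x | BlockRel B x y} = (l + 1) * Fintype.card ι :=
  calc #{x | BlockRel B x y}
    _ = ∑ p, #{a | y.1 ∈ B p a} := by
      simp only [card_filter, Fintype.sum_prod_type, BlockRel]
    _ = ∑ p, #{a | p ∈ B y.1 a} := sum_congr rfl fun p _ => hB.card_blocks_through_comm p y.1
    _ = ∑ a, #(B y.1 a) := by
      simpa [bipartiteAbove, bipartiteBelow] using
        sum_card_bipartiteAbove_eq_sum_card_bipartiteBelow (s := univ) (t := univ)
          fun p a => p ∈ B y.1 a
    _ = (l + 1) * Fintype.card ι := by simp [hB.card_block, mul_comm]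

theorem card_blockRel_walks_of_blockRel (hB : IsPointedBlockSystem B l d) {x y : P × ι}
    (h : BlockRel B x y) :
    #{z | BlockRel B x z ∧ BlockRel B z y} = l * d + Fintype.card ι := by
  have hrest : ∀ p ∈ (B x.1 x.2).erase y.1, #{a | y.1 ∈ B p a} = d := fun p hp =>
    hB.card_blocks_through (ne_of_mem_erase hp)
  rw [card_blockRel_walks_eq_sum, ← sum_erase_add _ _ h, sum_const_nat hrest,
    card_erase_of_mem h, hB.card_block, Nat.add_sub_cancel, hB.card_blocks_through_eq_ite,
    if_pos rfl]

theorem card_blockRel_walks_of_not_blockRel (hB : IsPointedBlockSystem B l d) {x y : P × ι}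
    (h : ¬ BlockRel B x y) :
    #{z | BlockRel B x z ∧ BlockRel B z y} = (l + 1) * d := by
  have hall : ∀ p ∈ B x.1 x.2, #{a | y.1 ∈ B p a} = d := fun p hp =>
    hB.card_blocks_through (by rintro rfl; exact h hp)
  rw [card_blockRel_walks_eq_sum, sum_const_nat hall, hB.card_block]

end IsPointedBlockSystem

theorem IsPointedBlockSystem.isDSRG {ι P : Type} [Fintype ι] [Fintype P] [DecidableEq P]
    {B : P → ι → Finset P} {l d : ℕ} (hB : IsPointedBlockSystem B l d) :
    IsDSRG (fun x y => BlockRel B x y ∧ x ≠ y) (Fintype.card P * Fintype.card ι)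
      ((l + 1) * Fintype.card ι - 1) (l * d + Fintype.card ι - 1) (l * d + Fintype.card ι - 2)
      ((l + 1) * d) := by
  rw [← Fintype.card_prod]
  exact isDSRG_of_reflexive (fun x => hB.mem_block x.1 x.2) hB.card_filter_blockRel_left
    hB.card_filter_blockRel_right (fun _ _ => hB.card_blockRel_walks_of_blockRel)
    fun _ _ => hB.card_blockRel_walks_of_not_blockRel

end PointedBlockSystem

/-- For all positive integers `d, l, s` such that `d` divides `ls` and
`1 ≤ l < ls/d`, there exists a directed strongly regular graph with parameters
`((1 + ls/d)s, ls + s − 1, ld + s − 1, ld + s − 2, (l+1)d)`. -/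
theorem exists_dsrg_family_three
    (d l s : ℕ) (hd : 0 < d) (hl : 0 < l) (hs : 0 < s)
    (hdvd : d ∣ l * s) (hlt : l < l * s / d) :
    ∃ (V : Type) (Adj : V → V → Prop),
      IsDSRG Adj
        ((1 + l * s / d) * s) (l * s + s - 1) (l * d + s - 1) (l * d + s - 2)
        ((l + 1) * d) := by
  have hm : s * l = d * (l * s / d) := by rw [Nat.mul_div_cancel' hdvd, mul_comm]
  obtain ⟨C, hC⟩ := exists_isTacticalConfiguration hm hlt.le
  have hdsrg := hC.isPointedBlockSystem.isDSRG
  simp only [Fintype.card_fin] at hdsrg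
  rw [add_comm 1, ← Nat.add_one_mul l s]
  exact ⟨_, _, hdsrg⟩
end

section
/- In the Construction I setup, the indexed family of blocks (B_{gl,j}) for g ∈ P, 1 ≤ l ≤ b, 1 ≤ j ≤ q forms a tactical configuration on the rq-element point set P with parameters (v̄, b̄, k̄, r̄) = (rq, rq²b, ra, rq(q−1)): there are rq²b blocks (counted with multiplicity over the index triples (g, l, j)), each block B_{gl,j} is an ra-element subset of P, and every point of P belongs to exactly rq(q−1) of the blocks B_{gl,j} (counted with multiplicity over the index triples). -/
/-!
The block `B_{gl,j}` is `B_j` with its part in the group of `g` replaced by `X_{gl}`, so it is a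
disjoint union of one `a`-set from each group. Now fix a point `x`. Over a fixed group of size `m`,
the number of triples `(g, l, j)` with `g` in that group and `x ∈ B_{gl,j}` is always `n * (m - 1)`,
where `n` is the number of the `B_j`:

* in the group of `x`, each of the `m - 1` points `g ≠ x` has exactly one part `X_{gl}` through `x`,
  and `j` is free;
* in another group, there are `m` choices of `g` and `b` of `l`, and `j` ranges over the `c` indices
  with `x ∈ B_j`; here `m * c = n * a` by double counting and `b * a = m - 1`.
-/

section

open Finset Function

variable {α ι κ β : Type*} [DecidableEq α]

/-- An indexed family of blocks `B` on a finite point set is a tactical configuration with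
parameters `(v, b, k, r)`; repeated blocks count with multiplicity. -/
structure IsTacticalConfiguration_s15 {I : Type*} [Fintype α] [Fintype I] (B : I → Finset α)
    (v b k r : ℕ) : Prop where
  card_points : Fintype.card α = v
  card_index : Fintype.card I = b
  card_block : ∀ i, #(B i) = k
  card_filter_mem_block : ∀ x, #{i | x ∈ B i} = r

/-- The block `B_{gl,j} = X_{gl} ∪ (B_j \ P_{hj})`, where `h` is the group of `g` and `B_j` is the
union of the `P_{hj}` over all groups `h`. The triple `(g, l, j)` is `t`. -/
def constructionIBlock [Fintype ι] (grp : α → ι) (P : ι → κ → Finset α) (X : α → β → Finset α)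
    (t : α × β × κ) : Finset α :=
  X t.1 t.2.1 ∪ ((univ.biUnion fun h => P h t.2.2) \ P (grp t.1) t.2.2)

/-- The setup of Construction I with groups of size `m`, block size `a`, and every point in `c` of
the blocks of its group; the number `n` of blocks per group is the cardinality of `κ`. The blocks
of the families `𝓟_h` are indexed so that `P h j` is the block of `𝓟_h` contained in `B_j`, and
`grp` is the function sending a point to its group. -/
structure IsConstructionI [Fintype κ] (G : ι → Finset α) (grp : α → ι) (P : ι → κ → Finset α)
    (X : α → β → Finset α) (m a c : ℕ) : Prop where
  disjoint_group : ∀ i j, i ≠ j → Disjoint (G i) (G j)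
  card_group : ∀ i, #(G i) = m
  mem_group_grp : ∀ x, x ∈ G (grp x)
  subset_group : ∀ h j, P h j ⊆ G h
  card_subblock : ∀ h j, #(P h j) = a
  card_filter_mem_subblock : ∀ h, ∀ x ∈ G h, #{j | x ∈ P h j} = c
  part_subset : ∀ g l, X g l ⊆ G (grp g) \ {g}
  card_part : ∀ g l, #(X g l) = a
  disjoint_part : ∀ g l l', l ≠ l' → Disjoint (X g l) (X g l')
  exists_mem_part : ∀ g, ∀ x ∈ G (grp g) \ {g}, ∃ l, x ∈ X g l

lemma biUnion_update_eq_union_sdiff [Fintype ι] [DecidableEq ι] {Q : ι → Finset α} {i : ι}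
    (hQ : ∀ h ≠ i, Disjoint (Q h) (Q i)) (s : Finset α) :
    univ.biUnion (update Q i s) = s ∪ (univ.biUnion Q \ Q i) := by
  ext x
  simp only [mem_biUnion, mem_univ, true_and, mem_union, mem_sdiff]
  constructor
  · rintro ⟨h, hx⟩
    obtain rfl | hne := eq_or_ne h i
    · exact .inl (by simpa only [update_self] using hx)
    · rw [update_of_ne hne] at hx
      exact .inr ⟨⟨h, hx⟩, disjoint_left.mp (hQ h hne) hx⟩
  · rintro (hx | ⟨⟨h, hx⟩, hxi⟩)
    · exact ⟨i, by rwa [update_self]⟩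
    · exact ⟨h, by rwa [update_of_ne (by rintro rfl; exact hxi hx)]⟩

lemma card_filter_comp_of_bijective {κ' : Type*} [Fintype κ] [Fintype κ'] {f : κ → κ'}
    (hf : Bijective f) (p : κ' → Prop) [DecidablePred p] : #{j | p (f j)} = #{i | p i} :=
  card_bijective f hf (by simp only [mem_filter, mem_univ, true_and, implies_true])

namespace IsConstructionI

variable [Fintype κ] {G : ι → Finset α} {grp : α → ι} {P : ι → κ → Finset α}
  {X : α → β → Finset α} {m a c : ℕ}

lemma mem_group_iff (hC : IsConstructionI G grp P X m a c) {x : α} {i : ι} :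
    x ∈ G i ↔ grp x = i := by
  refine ⟨fun hx => ?_, fun h => h ▸ hC.mem_group_grp x⟩
  by_contra hne
  exact disjoint_left.mp (hC.disjoint_group _ _ hne) (hC.mem_group_grp x) hx

lemma notMem_part_self (hC : IsConstructionI G grp P X m a c) (g : α) (l : β) : g ∉ X g l :=
  fun hg => (mem_sdiff.mp (hC.part_subset g l hg)).2 (mem_singleton_self g)

lemma card_filter_mem_part [Fintype β] (hC : IsConstructionI G grp P X m a c) {x g : α}
    (hgrp : grp x = grp g) (hne : x ≠ g) : #{l | x ∈ X g l} = 1 := by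
  obtain ⟨l, hl⟩ := hC.exists_mem_part g x
    (mem_sdiff.mpr ⟨hC.mem_group_iff.mpr hgrp, notMem_singleton.mpr hne⟩)
  refine card_eq_one.mpr ⟨l, eq_singleton_iff_unique_mem.mpr ⟨mem_filter_univ l |>.mpr hl, ?_⟩⟩
  intro l' hl'
  by_contra hll'
  exact disjoint_left.mp (hC.disjoint_part g l' l hll') ((mem_filter_univ l').mp hl') hl

lemma card_parts_mul_card_part [Fintype β] (hC : IsConstructionI G grp P X m a c) (g : α) :
    Fintype.card β * a = m - 1 := by
  have hunion : univ.biUnion (X g) = G (grp g) \ {g} := by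
    refine Subset.antisymm (biUnion_subset.mpr fun l _ => hC.part_subset g l) fun x hx => ?_
    obtain ⟨l, hl⟩ := hC.exists_mem_part g x hx
    exact mem_biUnion.mpr ⟨l, mem_univ l, hl⟩
  calc Fintype.card β * a = ∑ l, #(X g l) := by
        simp only [hC.card_part, sum_const, card_univ, smul_eq_mul]
    _ = #(univ.biUnion (X g)) := (card_biUnion fun l _ l' _ => hC.disjoint_part g l l').symm
    _ = m - 1 := by
      rw [hunion, card_sdiff_of_subset (singleton_subset_iff.mpr (hC.mem_group_grp g)),
        hC.card_group, card_singleton]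

lemma card_group_mul_degree (hC : IsConstructionI G grp P X m a c) (h : ι) :
    m * c = Fintype.card κ * a := by
  rw [← hC.card_group h, ← card_univ]
  refine card_mul_eq_card_mul (fun x j => x ∈ P h j) (hC.card_filter_mem_subblock h) fun j _ => ?_
  rw [bipartiteBelow, filter_mem_eq_inter, inter_eq_right.mpr (hC.subset_group h j),
    hC.card_subblock]

lemma sum_sum_group [Fintype α] [Fintype ι] {M : Type*} [AddCommMonoid M]
    (hC : IsConstructionI G grp P X m a c) (f : α → M) :
    ∑ i, ∑ g ∈ G i, f g = ∑ g, f g := by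
  classical
  rw [← sum_fiberwise univ grp f]
  refine sum_congr rfl fun i _ => sum_congr ?_ fun _ _ => rfl
  ext x
  rw [hC.mem_group_iff, mem_filter_univ]

lemma card_points [Fintype α] [Fintype ι] (hC : IsConstructionI G grp P X m a c) :
    Fintype.card α = Fintype.card ι * m := by
  simpa only [sum_const, smul_eq_mul, mul_one, hC.card_group, card_univ]
    using (hC.sum_sum_group fun _ => (1 : ℕ)).symm

lemma update_subset_group [DecidableEq ι] (hC : IsConstructionI G grp P X m a c)
    (g : α) (l : β) (j : κ) (h : ι) : update (fun h => P h j) (grp g) (X g l) h ⊆ G h := by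
  obtain rfl | hne := eq_or_ne h (grp g)
  · rw [update_self]
    exact (hC.part_subset g l).trans sdiff_subset
  · rw [update_of_ne hne]
    exact hC.subset_group h j

section Block

variable [Fintype ι]

lemma block_eq_biUnion_update [DecidableEq ι] (hC : IsConstructionI G grp P X m a c)
    (g : α) (l : β) (j : κ) :
    constructionIBlock grp P X (g, l, j) =
      univ.biUnion (update (fun h => P h j) (grp g) (X g l)) :=
  (biUnion_update_eq_union_sdiff (fun h hne => (hC.disjoint_group h _ hne).mono
    (hC.subset_group h j) (hC.subset_group _ j)) _).symm

lemma mem_block_iff [DecidableEq ι] (hC : IsConstructionI G grp P X m a c)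
    {x g : α} {l : β} {j : κ} :
    x ∈ constructionIBlock grp P X (g, l, j) ↔
      x ∈ update (fun h => P h j) (grp g) (X g l) (grp x) := by
  rw [hC.block_eq_biUnion_update, mem_biUnion]
  refine ⟨fun ⟨h, _, hx⟩ => ?_, fun hx => ⟨grp x, mem_univ _, hx⟩⟩
  rwa [hC.mem_group_iff.mp (hC.update_subset_group g l j h hx)]

lemma mem_block_iff_mem_part (hC : IsConstructionI G grp P X m a c) {x g : α} {l : β} {j : κ}
    (hgrp : grp x = grp g) : x ∈ constructionIBlock grp P X (g, l, j) ↔ x ∈ X g l := by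
  classical rw [hC.mem_block_iff, hgrp, update_self]

lemma mem_block_iff_mem_subblock (hC : IsConstructionI G grp P X m a c) {x g : α} {l : β} {j : κ}
    (hgrp : grp x ≠ grp g) : x ∈ constructionIBlock grp P X (g, l, j) ↔ x ∈ P (grp x) j := by
  classical rw [hC.mem_block_iff, update_of_ne hgrp]

lemma card_block (hC : IsConstructionI G grp P X m a c) (g : α) (l : β) (j : κ) :
    #(constructionIBlock grp P X (g, l, j)) = Fintype.card ι * a := by
  classical
  have hcard (h : ι) : #(update (fun h => P h j) (grp g) (X g l) h) = a := by
    obtain rfl | hne := eq_or_ne h (grp g)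
    · rw [update_self, hC.card_part]
    · rw [update_of_ne hne, hC.card_subblock]
  rw [hC.block_eq_biUnion_update, card_biUnion fun h _ h' _ hne =>
    (hC.disjoint_group h h' hne).mono (hC.update_subset_group g l j h)
      (hC.update_subset_group g l j h')]
  simp only [hcard, sum_const, card_univ, smul_eq_mul]

variable [Fintype β]

lemma card_filter_mem_block_self (hC : IsConstructionI G grp P X m a c) (x : α) :
    #{p : β × κ | x ∈ constructionIBlock grp P X (x, p)} = 0 := by
  rw [card_eq_zero, filter_eq_empty_iff]
  exact fun p _ hp => hC.notMem_part_self x p.1 ((hC.mem_block_iff_mem_part rfl).mp hp)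

lemma card_filter_mem_block_of_grp_eq (hC : IsConstructionI G grp P X m a c) {x g : α}
    (hgrp : grp x = grp g) (hne : x ≠ g) :
    #{p : β × κ | x ∈ constructionIBlock grp P X (g, p)} = Fintype.card κ := by
  have hprod : ({p : β × κ | x ∈ constructionIBlock grp P X (g, p)} : Finset (β × κ)) =
      ({l | x ∈ X g l} : Finset β) ×ˢ univ := by
    ext p
    simp only [mem_filter_univ, mem_product, mem_univ, and_true, hC.mem_block_iff_mem_part hgrp]
  rw [hprod, card_product, hC.card_filter_mem_part hgrp hne, one_mul, card_univ]

lemma card_filter_mem_block_of_grp_ne (hC : IsConstructionI G grp P X m a c) {x g : α}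
    (hgrp : grp x ≠ grp g) :
    #{p : β × κ | x ∈ constructionIBlock grp P X (g, p)} = Fintype.card β * c := by
  have hprod : ({p : β × κ | x ∈ constructionIBlock grp P X (g, p)} : Finset (β × κ)) =
      univ ×ˢ ({j | x ∈ P (grp x) j} : Finset κ) := by
    ext p
    simp only [mem_filter_univ, mem_product, mem_univ, true_and,
      hC.mem_block_iff_mem_subblock hgrp]
  rw [hprod, card_product, hC.card_filter_mem_subblock _ x (hC.mem_group_grp x), card_univ]

lemma sum_group_card_filter_mem_block (hC : IsConstructionI G grp P X m a c) (x : α) (i : ι) :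
    ∑ g ∈ G i, #{p : β × κ | x ∈ constructionIBlock grp P X (g, p)} =
      Fintype.card κ * (m - 1) := by
  obtain rfl | hne := eq_or_ne (grp x) i
  · have hx := hC.mem_group_grp x
    have hother : ∀ g ∈ (G (grp x)).erase x,
        #{p : β × κ | x ∈ constructionIBlock grp P X (g, p)} = Fintype.card κ := fun g hg =>
      hC.card_filter_mem_block_of_grp_eq (hC.mem_group_iff.mp (mem_of_mem_erase hg)).symm
        (ne_of_mem_erase hg).symm
    rw [← add_sum_erase _ _ hx, hC.card_filter_mem_block_self, zero_add, sum_const_nat hother,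
      card_erase_of_mem hx, hC.card_group, mul_comm]
  · have hconst : ∀ g ∈ G i,
        #{p : β × κ | x ∈ constructionIBlock grp P X (g, p)} = Fintype.card β * c := fun g hg =>
      hC.card_filter_mem_block_of_grp_ne ((hC.mem_group_iff.mp hg).symm ▸ hne)
    calc _ = m * (Fintype.card β * c) := by rw [sum_const_nat hconst, hC.card_group]
      _ = Fintype.card β * (m * c) := mul_left_comm ..
      _ = Fintype.card κ * (Fintype.card β * a) := by
        rw [hC.card_group_mul_degree i, mul_left_comm]
      _ = Fintype.card κ * (m - 1) := by rw [hC.card_parts_mul_card_part x]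

lemma card_filter_mem_block [Fintype α] (hC : IsConstructionI G grp P X m a c) (x : α) :
    #{t | x ∈ constructionIBlock grp P X t} = Fintype.card ι * Fintype.card κ * (m - 1) :=
  calc #{t | x ∈ constructionIBlock grp P X t}
    _ = ∑ g, #{p : β × κ | x ∈ constructionIBlock grp P X (g, p)} := by
      simp only [card_filter]
      exact Fintype.sum_prod_type _
    _ = ∑ i, ∑ g ∈ G i, #{p : β × κ | x ∈ constructionIBlock grp P X (g, p)} :=
      (hC.sum_sum_group _).symm
    _ = Fintype.card ι * Fintype.card κ * (m - 1) := by
      simp only [hC.sum_group_card_filter_mem_block, sum_const, card_univ, smul_eq_mul, mul_assoc]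

end Block

end IsConstructionI

theorem constructionI_tactical_configuration_general [Fintype α] [Fintype ι] [Fintype κ]
    [Fintype β] {G : ι → Finset α} {grp : α → ι} {P : ι → κ → Finset α} {X : α → β → Finset α}
    {m a c : ℕ} (hC : IsConstructionI G grp P X m a c) :
    IsTacticalConfiguration_s15 (constructionIBlock grp P X)
      (Fintype.card ι * m) (Fintype.card ι * m * Fintype.card κ * Fintype.card β)
      (Fintype.card ι * a) (Fintype.card ι * Fintype.card κ * (m - 1)) where
  card_points := hC.card_points
  card_index := by
    rw [Fintype.card_prod, Fintype.card_prod, hC.card_points, mul_comm (Fintype.card β),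
      ← mul_assoc]
  card_block t := hC.card_block t.1 t.2.1 t.2.2
  card_filter_mem_block := hC.card_filter_mem_block

end

/-- **Tactical configuration of Construction I.**  With `q = ab + 1`, the point set
`P` (the finite type `α`) is partitioned into `r` groups of size `q`; `Pblk j`
enumerates the `q` blocks of `𝓟_j` (each an `a`-subset of `G j`, each point of
`G j` in exactly `a` of them); `B_j = ⋃_h Pblk h (σ h j)` with `σ h` bijective,
so `P_{hj} = Pblk h (σ h j)`; and for each point `g`, `X g 1, …, X g b` is a
partition of `G (grp g) \ {g}` into `b` parts of size `a`.  Then the indexed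
family of blocks `B_{gl,j} = X g l ∪ (B_j \ P_{(grp g) j})`, over the index
triples `(g, l, j)`, forms a tactical configuration on `P` with parameters
`(v̄, b̄, k̄, r̄) = (rq, rq²b, ra, rq(q−1))`: there are `rq` points and `rq²b`
index triples, each block has `ra` elements, and each point lies in exactly
`rq(q−1)` of the blocks (counted with multiplicity over the index triples). -/
theorem constructionI_tactical_configuration
    {α : Type} [Fintype α] [DecidableEq α]
    (r q a b : ℕ) (hr : 1 < r) (hq : 1 < q) (ha : 1 < a) (hb : 1 < b)
    (hab : q = a * b + 1)
    (G : Fin r → Finset α)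
    (hGdisj : ∀ i j : Fin r, i ≠ j → Disjoint (G i) (G j))
    (hGcard : ∀ i : Fin r, (G i).card = q)
    (grp : α → Fin r) (hgrp : ∀ x : α, x ∈ G (grp x))
    (Pblk : Fin r → Fin q → Finset α)
    (hPsub : ∀ (j : Fin r) (i : Fin q), Pblk j i ⊆ G j)
    (hPcard : ∀ (j : Fin r) (i : Fin q), (Pblk j i).card = a)
    (hPreg : ∀ j : Fin r, ∀ x ∈ G j,
      (Finset.univ.filter (fun i : Fin q => x ∈ Pblk j i)).card = a)
    (σ : Fin r → Fin q → Fin q) (hσ : ∀ h : Fin r, Function.Bijective (σ h))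
    (X : α → Fin b → Finset α)
    (hXsub : ∀ (g : α) (l : Fin b), X g l ⊆ G (grp g) \ {g})
    (hXcard : ∀ (g : α) (l : Fin b), (X g l).card = a)
    (hXdisj : ∀ (g : α) (l l' : Fin b), l ≠ l' → Disjoint (X g l) (X g l'))
    (hXcover : ∀ g : α, ∀ x ∈ G (grp g) \ {g}, ∃ l : Fin b, x ∈ X g l) :
    Fintype.card α = r * q ∧
    Fintype.card (α × Fin b × Fin q) = r * q * q * b ∧
    (∀ (g : α) (l : Fin b) (j : Fin q),
      (X g l ∪ ((Finset.univ.biUnion fun h : Fin r => Pblk h (σ h j)) \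
        Pblk (grp g) (σ (grp g) j))).card = r * a) ∧
    (∀ x : α,
      (Finset.univ.filter (fun p : α × Fin b × Fin q =>
        x ∈ X p.1 p.2.1 ∪
          ((Finset.univ.biUnion fun h : Fin r => Pblk h (σ h p.2.2)) \
            Pblk (grp p.1) (σ (grp p.1) p.2.2)))).card = r * q * (q - 1)) := by
  have hC : IsConstructionI G grp (fun h j => Pblk h (σ h j)) X q a a :=
    ⟨hGdisj, hGcard, hgrp, fun h j => hPsub h (σ h j), fun h j => hPcard h (σ h j),
      fun h x hx => (card_filter_comp_of_bijective (hσ h) (x ∈ Pblk h ·)).trans (hPreg h x hx),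
      hXsub, hXcard, hXdisj, hXcover⟩
  have hT := constructionI_tactical_configuration_general hC
  simp only [Fintype.card_fin] at hT
  exact ⟨hT.card_points, hT.card_index, fun g l j => hT.card_block (g, l, j),
    hT.card_filter_mem_block⟩
end

section
/- Projective-plane instance, first graph. Let D₁ be the directed graph on the vertex set V = {(p, B) : p ∈ P, B ∈ 𝓑_p}, with adjacency (p, B) → (p′, B′) if and only if p ∈ B′. Then D₁ is a directed strongly regular graph with parameters (v, k, t, λ, μ) = ((n+1)(n² + n + 1), n(n+1), n, n − 1, n). -/
/-! A path of length two `(p, B) → (q, C) → (p', B')` is a point `q ∈ B'` together with a block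
through `q` whose punctured block contains `p`. For `q = p` there is no such block, and for
`q ≠ p` there are as many as there are blocks through two given points. So the count depends only
on `#(B' \ {p})`, that is, on the size of `B'` and on whether `(p, B) → (p', B')`. Letting `q` range
over all points gives the out-degree. The in-degree of `(p', B')` counts the blocks through the
points of `B'`. -/

section Design

open Finset

variable {α : Type*} [DecidableEq α] {𝓑 : Finset (Finset α)}

/-- `𝓑` is the block set of a 2-design with blocks of size `k` in which any two distinct points lie
on exactly `c` common blocks. The points are all of `α`, and blocks are not repeated. -/
structure IsTwoDesign (𝓑 : Finset (Finset α)) (k c : ℕ) : Prop where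
  card_block : ∀ L ∈ 𝓑, #L = k
  card_pair : ∀ p q : α, p ≠ q → #{L ∈ 𝓑 | p ∈ L ∧ q ∈ L} = c

theorem isTwoDesign_one_of_existsUnique {k : ℕ} (hblock : ∀ L ∈ 𝓑, #L = k)
    (hpair : ∀ p q : α, p ≠ q → ∃! L, L ∈ 𝓑 ∧ p ∈ L ∧ q ∈ L) : IsTwoDesign 𝓑 k 1 where
  card_block := hblock
  card_pair p q hpq := by
    simpa only [card_eq_one_iff_existsUnique, mem_filter] using hpair p q hpq

theorem IsTwoDesign.card_blocks_through_mul [Fintype α] {n c : ℕ}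
    (h : IsTwoDesign 𝓑 (n + 1) c) (p : α) :
    #{L ∈ 𝓑 | p ∈ L} * n = c * (Fintype.card α - 1) := by
  have points_on_block (L) (hL : L ∈ ({L ∈ 𝓑 | p ∈ L} : Finset _)) :
      #((univ.erase p).bipartiteAbove (fun L q => q ∈ L) L) = n := by
    obtain ⟨hL, hp⟩ := mem_filter.1 hL
    have other_points : (univ.erase p).bipartiteAbove (fun L q => q ∈ L) L = L.erase p := by
      ext q; simp [bipartiteAbove]
    rw [other_points, card_erase_of_mem hp, h.card_block L hL, Nat.add_sub_cancel]
  have blocks_through_pair (q) (hq : q ∈ univ.erase p) :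
      #(({L ∈ 𝓑 | p ∈ L} : Finset _).bipartiteBelow (fun L q => q ∈ L) q) = c := by
    rw [bipartiteBelow, filter_filter, h.card_pair p q (ne_of_mem_erase hq).symm]
  rw [card_mul_eq_card_mul _ points_on_block blocks_through_pair,
    card_erase_of_mem (mem_univ p), card_univ, mul_comm]

/-- The pairs `(p, L \ {p})` with `p ∈ L ∈ 𝓑`: the vertices of the graph `D₁` of `𝓑`. -/
abbrev PuncturedBlock (𝓑 : Finset (Finset α)) :=
  {x : α × Finset α // ∃ L ∈ 𝓑, x.1 ∈ L ∧ x.2 = L \ {x.1}}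

namespace PuncturedBlock

theorem fst_notMem_snd (x : PuncturedBlock 𝓑) : x.1.1 ∉ x.1.2 := by
  obtain ⟨L, -, -, hx⟩ := x.2
  simp [hx]

theorem card_snd {n : ℕ} (hblock : ∀ L ∈ 𝓑, #L = n + 1) (x : PuncturedBlock 𝓑) :
    #x.1.2 = n := by
  obtain ⟨L, hL, hp, hx⟩ := x.2
  rw [hx, sdiff_singleton_eq_erase, card_erase_of_mem hp, hblock L hL, Nat.add_sub_cancel]

theorem insert_fst_snd_mem (x : PuncturedBlock 𝓑) : insert x.1.1 x.1.2 ∈ 𝓑 := by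
  obtain ⟨L, hL, hp, hx⟩ := x.2
  rwa [hx, sdiff_singleton_eq_erase, insert_erase hp]

/-- The vertices of `D₁` are the flags of the design: `(p, B)` corresponds to `(p, insert p B)`. -/
def flagEquiv : PuncturedBlock 𝓑 ≃ {f : α × Finset α // f.2 ∈ 𝓑 ∧ f.1 ∈ f.2} where
  toFun z := ⟨(z.1.1, insert z.1.1 z.1.2), z.insert_fst_snd_mem, mem_insert_self _ _⟩
  invFun f := ⟨(f.1.1, f.1.2.erase f.1.1), f.1.2, f.2.1, f.2.2,
    (sdiff_singleton_eq_erase _ _).symm⟩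
  left_inv z := by simp only [erase_insert z.fst_notMem_snd]
  right_inv f := by simp only [insert_erase f.2.2]

theorem card_snd_and_fst_mem_eq_sum (S : Finset α) (Q : Finset α → Prop) [DecidablePred Q] :
    Nat.card {z : PuncturedBlock 𝓑 // Q z.1.2 ∧ z.1.1 ∈ S} =
      ∑ p ∈ S, #{L ∈ 𝓑 | p ∈ L ∧ Q (L.erase p)} := by
  let good (f : α × Finset α) : Prop := Q (f.2.erase f.1) ∧ f.1 ∈ S
  have good_flag (z : PuncturedBlock 𝓑) : Q z.1.2 ∧ z.1.1 ∈ S ↔ good (flagEquiv z).1 := by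
    simp only [good, flagEquiv, Equiv.coe_fn_mk, erase_insert z.fst_notMem_snd]
  calc
    _ = Nat.card {f : α × Finset α // (f.2 ∈ 𝓑 ∧ f.1 ∈ f.2) ∧ good f} :=
      Nat.card_congr <| (flagEquiv.subtypeEquiv good_flag).trans
        (Equiv.subtypeSubtypeEquivSubtypeInter _ good)
    _ = #{f ∈ S ×ˢ 𝓑 | f.1 ∈ f.2 ∧ Q (f.2.erase f.1)} :=
      Nat.subtype_card _ fun f => by
        rw [mem_filter, mem_product]
        tauto
    _ = ∑ p ∈ S, #{L ∈ 𝓑 | p ∈ L ∧ Q (L.erase p)} := by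
      simp only [card_filter, sum_product]

theorem card_fst_mem {r : ℕ} (hr : ∀ p, #{L ∈ 𝓑 | p ∈ L} = r) (S : Finset α) :
    Nat.card {z : PuncturedBlock 𝓑 // z.1.1 ∈ S} = #S * r := by
  simpa [hr] using card_snd_and_fst_mem_eq_sum (𝓑 := 𝓑) S fun _ => True

theorem card_mem_snd_and_fst_mem {c : ℕ}
    (hpair : ∀ p q : α, p ≠ q → #{L ∈ 𝓑 | p ∈ L ∧ q ∈ L} = c) (p : α) (S : Finset α) :
    Nat.card {z : PuncturedBlock 𝓑 // p ∈ z.1.2 ∧ z.1.1 ∈ S} = c * #(S.erase p) := by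
  have fiber (q : α) : #{L ∈ 𝓑 | q ∈ L ∧ p ∈ L.erase q} = if q = p then 0 else c := by
    split_ifs with hqp
    · simp [hqp]
    · simp [Ne.symm hqp, hpair q p hqp]
  rw [card_snd_and_fst_mem_eq_sum S (p ∈ ·), sum_congr rfl fun q _ => fiber q, sum_ite, filter_ne']
  simp [mul_comm]

end PuncturedBlock

end Design

theorem projective_plane_D1_dsrg_general
    {α : Type} [Fintype α] [DecidableEq α] {n c r : ℕ} (hn : 0 < n)
    {𝓑 : Finset (Finset α)} (h𝓑 : IsTwoDesign 𝓑 (n + 1) c)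
    (hr : r * n = c * (Fintype.card α - 1)) :
    IsDSRG (V := PuncturedBlock 𝓑) (fun x y => x.1.1 ∈ y.1.2)
      (Fintype.card α * r) (r * n) (c * n) (c * (n - 1)) (c * n) := by
  have replication (p : α) : Finset.card {L ∈ 𝓑 | p ∈ L} = r :=
    Nat.eq_of_mul_eq_mul_right hn ((h𝓑.card_blocks_through_mul p).trans hr.symm)
  have paths := PuncturedBlock.card_mem_snd_and_fst_mem h𝓑.card_pair
  have card_snd := PuncturedBlock.card_snd h𝓑.card_block
  refine ⟨inferInstance, PuncturedBlock.fst_notMem_snd, ?vertices, fun x => ?outdegree,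
    fun x => ?indegree, fun x => ?reciprocal, fun x y _ hxy => ?adj, fun x y _ hxy => ?nonadj⟩
  case vertices => simpa using PuncturedBlock.card_fst_mem replication Finset.univ
  case outdegree => simpa [hr] using paths x.1.1 Finset.univ
  case indegree => rw [PuncturedBlock.card_fst_mem replication, card_snd, mul_comm]
  case reciprocal => rw [paths, Finset.erase_eq_of_notMem x.fst_notMem_snd, card_snd]
  case adj => rw [paths, Finset.card_erase_of_mem hxy, card_snd]
  case nonadj => rw [paths, Finset.erase_eq_of_notMem hxy, card_snd]

/-- **Projective-plane instance, first graph `D₁`.**  Let `(P, 𝓛)` be a projective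
plane of order `n ≥ 2` (a `2-(n²+n+1, n+1, 1)` design): `P` has `n² + n + 1`
points, each line has `n + 1` points, and each pair of distinct points lies on
exactly one line.  The blocks of `𝓑_p` are the punctured lines `L \ {p}` for the
lines `L` through `p`.  The vertices are the pairs `(p, B)` with `B ∈ 𝓑_p`, and
`(p,B) → (p',B')` iff `p ∈ B'`.  This directed graph is a DSRG with parameters
`((n+1)(n² + n + 1), n(n+1), n, n − 1, n)`. -/
theorem projective_plane_D1_dsrg
    {α : Type} [Fintype α] [DecidableEq α]
    (n : ℕ) (hn : 2 ≤ n)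
    (hcard : Fintype.card α = n ^ 2 + n + 1)
    (𝓛 : Finset (Finset α))
    (hline : ∀ L ∈ 𝓛, L.card = n + 1)
    (hpair : ∀ p q : α, p ≠ q → ∃! L, L ∈ 𝓛 ∧ p ∈ L ∧ q ∈ L) :
    IsDSRG (V := {x : α × Finset α // ∃ L ∈ 𝓛, x.1 ∈ L ∧ x.2 = L \ {x.1}})
      (fun x y => x.1.1 ∈ y.1.2)
      ((n + 1) * (n ^ 2 + n + 1)) (n * (n + 1)) n (n - 1) n := by
  have hdesign := isTwoDesign_one_of_existsUnique hline hpair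
  simpa [hcard, mul_comm] using
    projective_plane_D1_dsrg_general (r := n + 1) (by lia) hdesign (by rw [hcard]; lia)
end

section
/- Projective-plane instance, second graph. Let D₂ be the directed graph on the vertex set V = {(p, B) : p ∈ P, B ∈ 𝓑_p}, with adjacency (p, B) → (p′, B′) if and only if either p ∈ B′, or p = p′ and B ≠ B′. Then D₂ is a directed strongly regular graph with parameters (v, k, t, λ, μ) = ((n+1)(n² + n + 1), n(n+2), 2n, 2n − 1, n + 1). -/
/-! Filling each puncture, `(p, L \ {p}) ↦ (p, L)`, turns the vertices into the flags of the plane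
and the adjacency into "`p` lies on the line of the other flag and the two flags differ". With
`R x y` meaning that the point of `x` lies on the line of `y`, the adjacency matrix is `R - I`, so
it suffices that `R` has constant row and column sums and satisfies `R² = β R + γ (J - R)`. An
entry of `R²` counts the flags `(q, M)` with `q ∈ L` and `p ∈ M`; that this number depends only on
whether `p ∈ L` is the defining property of a partial geometric design. In a 2-design of index `Λ`
each `q ∈ L` other than `p` contributes `Λ` choices of `M`, and `q = p` contributes the number of
blocks through `p`. -/

open Finset

theorem isDSRG_and_ne_of_refl {V : Type} [Finite V] {R : V → V → Prop} (hrefl : ∀ x, R x x)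
    {d β γ : ℕ} (hout : ∀ x, {y | R x y}.ncard = d) (hin : ∀ x, {y | R y x}.ncard = d)
    (hβ : ∀ x y, R x y → {z | R x z ∧ R z y}.ncard = β)
    (hγ : ∀ x y, ¬ R x y → {z | R x z ∧ R z y}.ncard = γ) :
    IsDSRG (fun x y => R x y ∧ x ≠ y) (Nat.card V) (d - 1) (β - 1) (β - 2) γ := by
  refine ⟨inferInstance, fun x h => h.2 rfl, rfl, fun x => ?_, fun x => ?_, fun x => ?_,
    fun x y hxy hadj => ?_, fun x y hxy hadj => ?_⟩
  · rw [← hout x, ← Set.ncard_sdiff_singleton_of_mem (s := {y | R x y}) (hrefl x)]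
    exact Nat.card_congr (Equiv.subtypeEquivRight fun y => and_congr_right fun _ => ne_comm)
  · rw [← hin x, ← Set.ncard_sdiff_singleton_of_mem (s := {y | R y x}) (hrefl x)]
    rfl
  · have hx : x ∈ {z | R x z ∧ R z x} := ⟨hrefl x, hrefl x⟩
    rw [← hβ x x (hrefl x), ← Set.ncard_sdiff_singleton_of_mem hx]
    exact Nat.card_congr (Equiv.subtypeEquivRight fun y => by grind)
  · have hx : x ∈ {z | R x z ∧ R z y} := ⟨hrefl x, hadj.1⟩
    have hy : y ∈ {z | R x z ∧ R z y} \ {x} := ⟨⟨hadj.1, hrefl y⟩, hxy.symm⟩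
    rw [← hβ x y hadj.1, ← Nat.sub_sub _ 1 1, ← Set.ncard_sdiff_singleton_of_mem hx,
      ← Set.ncard_sdiff_singleton_of_mem hy]
    exact Nat.card_congr (Equiv.subtypeEquivRight fun z => by grind)
  · have hR : ¬ R x y := fun h => hadj ⟨h, hxy⟩
    rw [← hγ x y hR]
    exact Nat.card_congr (Equiv.subtypeEquivRight fun z => by grind)

theorem IsDSRG.of_relIso {V W : Type} {A : V → V → Prop} {B : W → W → Prop} (e : A ≃r B)
    {v k t lam mu : ℕ} (h : IsDSRG A v k t lam mu) : IsDSRG B v k t lam mu := by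
  obtain ⟨hfin, hirrefl, hv, hout, hin, ht, hlam, hmu⟩ := h
  have hadj (x y : V) : A x y ↔ B (e x) (e y) := e.map_rel_iff.symm
  have hpaths (x y : V) :
      Nat.card {z // A x z ∧ A z y} = Nat.card {z // B (e x) z ∧ B z (e y)} :=
    Nat.card_congr (e.toEquiv.subtypeEquiv fun z => and_congr (hadj x z) (hadj z y))
  refine ⟨.of_equiv V e.toEquiv, e.surjective.forall.2 fun x => (hadj x x).not.1 (hirrefl x),
    (Nat.card_congr e.toEquiv).symm.trans hv, e.surjective.forall.2 fun x => ?_,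
    e.surjective.forall.2 fun x => ?_, e.surjective.forall.2 fun x => ?_,
    e.surjective.forall₂.2 fun x y hne hB => ?_, e.surjective.forall₂.2 fun x y hne hB => ?_⟩
  · exact (Nat.card_congr (e.toEquiv.subtypeEquiv (hadj x))).symm.trans (hout x)
  · exact (Nat.card_congr (e.toEquiv.subtypeEquiv (hadj · x))).symm.trans (hin x)
  · exact (hpaths x x).symm.trans (ht x)
  · exact (hpaths x y).symm.trans (hlam x y (ne_of_apply_ne e hne) ((hadj x y).2 hB))
  · exact (hpaths x y).symm.trans (hmu x y (ne_of_apply_ne e hne) ((hadj x y).not.2 hB))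

namespace BlockDesign

section Flags

variable {α : Type*} [Fintype α] [DecidableEq α] {𝓛 : Finset (Finset α)}

/-- The flags of an incidence structure: its incident point-block pairs. -/
def flags (𝓛 : Finset (Finset α)) : Finset (α × Finset α) :=
  {x ∈ univ ×ˢ 𝓛 | x.1 ∈ x.2}

theorem mem_flags {x : α × Finset α} : x ∈ flags 𝓛 ↔ x.2 ∈ 𝓛 ∧ x.1 ∈ x.2 := by
  simp [flags]

theorem card_filter_flags_eq_sum_points (P : α → Prop) [DecidablePred P]
    (Q : Finset α → Prop) [DecidablePred Q] :
    #{x ∈ flags 𝓛 | P x.1 ∧ Q x.2} = ∑ p with P p, #{L ∈ 𝓛 | p ∈ L ∧ Q L} := by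
  simp only [flags, filter_filter, card_filter, sum_product, sum_filter]
  refine sum_congr rfl fun p _ => ?_
  split_ifs with hp <;> simp [hp]

theorem card_filter_flags_eq_sum_blocks (Q : Finset α → Prop) [DecidablePred Q] :
    #{x ∈ flags 𝓛 | Q x.2} = ∑ L ∈ 𝓛 with Q L, #L := by
  simp only [flags, filter_filter, card_filter, sum_product_right, sum_filter]
  refine sum_congr rfl fun L _ => ?_
  split_ifs with hL <;> simp [hL]

theorem ncard_subtype_flags (Q : α × Finset α → Prop) [DecidablePred Q] :
    {x : {x // x ∈ flags 𝓛} | Q x}.ncard = #{x ∈ flags 𝓛 | Q x} := by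
  rw [← Set.ncard_coe_finset, ← Set.ncard_image_of_injective _ Subtype.val_injective]
  congr 1
  ext x
  simp only [Set.mem_image, Set.mem_ofPred_eq, Subtype.exists, mem_coe, mem_filter]
  grind

end Flags

/-- A partial geometric design (also called a 1½-design): blocks have size `k`, points lie on
`r` blocks, and the number of flags `(q, M)` with `q ∈ L` and `p ∈ M` is `β` if `(p, L)` is a flag
and `γ` if it is an antiflag. -/
structure IsPartialGeometricDesign {α : Type*} [Fintype α] [DecidableEq α]
    (𝓛 : Finset (Finset α)) (k r β γ : ℕ) : Prop where
  card_block : ∀ L ∈ 𝓛, #L = k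
  card_blocks_through : ∀ p, #{L ∈ 𝓛 | p ∈ L} = r
  card_flags_of_mem : ∀ p, ∀ L ∈ 𝓛, p ∈ L → #{x ∈ flags 𝓛 | x.1 ∈ L ∧ p ∈ x.2} = β
  card_flags_of_notMem : ∀ p, ∀ L ∈ 𝓛, p ∉ L → #{x ∈ flags 𝓛 | x.1 ∈ L ∧ p ∈ x.2} = γ

namespace IsPartialGeometricDesign

section Counting

variable {α : Type*} [Fintype α] [DecidableEq α] {𝓛 : Finset (Finset α)} {k r β γ : ℕ}

theorem card_flags (h : IsPartialGeometricDesign 𝓛 k r β γ) :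
    #(flags 𝓛) = Fintype.card α * r := by
  simpa [h.card_blocks_through] using
    card_filter_flags_eq_sum_points (𝓛 := 𝓛) (fun _ => True) (fun _ => True)

theorem card_flags_point_mem (h : IsPartialGeometricDesign 𝓛 k r β γ) {L : Finset α}
    (hL : L ∈ 𝓛) : #{x ∈ flags 𝓛 | x.1 ∈ L} = k * r := by
  simpa [h.card_blocks_through, h.card_block L hL] using
    card_filter_flags_eq_sum_points (𝓛 := 𝓛) (· ∈ L) (fun _ => True)

theorem card_flags_mem_block (h : IsPartialGeometricDesign 𝓛 k r β γ) (p : α) :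
    #{x ∈ flags 𝓛 | p ∈ x.2} = k * r := by
  rw [card_filter_flags_eq_sum_blocks (p ∈ ·),
    sum_const_nat fun L hL => h.card_block L (mem_filter.1 hL).1, h.card_blocks_through, mul_comm]

end Counting

theorem isDSRG_flags {α : Type} [Fintype α] [DecidableEq α] {𝓛 : Finset (Finset α)}
    {k r β γ : ℕ} (h : IsPartialGeometricDesign 𝓛 k r β γ) :
    IsDSRG (V := {x // x ∈ flags 𝓛}) (fun x y => x.1.1 ∈ y.1.2 ∧ x ≠ y)
      (Fintype.card α * r) (k * r - 1) (β - 1) (β - 2) γ := by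
  have hpaths (x y : {x // x ∈ flags 𝓛}) :
      {z : {x // x ∈ flags 𝓛} | x.1.1 ∈ z.1.2 ∧ z.1.1 ∈ y.1.2}.ncard =
        #{z ∈ flags 𝓛 | z.1 ∈ y.1.2 ∧ x.1.1 ∈ z.2} := by
    simp only [and_comm (a := x.1.1 ∈ _)]
    exact ncard_subtype_flags fun z => z.1 ∈ y.1.2 ∧ x.1.1 ∈ z.2
  rw [← h.card_flags, ← Nat.card_eq_finsetCard]
  refine isDSRG_and_ne_of_refl (fun x => (mem_flags.1 x.2).2) (fun x => ?_) (fun x => ?_)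
    (fun x y hxy => ?_) (fun x y hxy => ?_)
  · exact (ncard_subtype_flags (x.1.1 ∈ ·.2)).trans (h.card_flags_mem_block x.1.1)
  · exact (ncard_subtype_flags (·.1 ∈ x.1.2)).trans
      (h.card_flags_point_mem (mem_flags.1 x.2).1)
  · exact (hpaths x y).trans (h.card_flags_of_mem _ _ (mem_flags.1 y.2).1 hxy)
  · exact (hpaths x y).trans (h.card_flags_of_notMem _ _ (mem_flags.1 y.2).1 hxy)

end IsPartialGeometricDesign

/-- A 2-design with block size `k` and index `Λ`: any two points lie on exactly `Λ` common
blocks. The number of points is `Fintype.card α`. -/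
structure IsTwoDesign {α : Type*} [DecidableEq α] (𝓛 : Finset (Finset α)) (k Λ : ℕ) :
    Prop where
  card_block : ∀ L ∈ 𝓛, #L = k
  card_blocks_through_pair : ∀ p q, p ≠ q → #{L ∈ 𝓛 | p ∈ L ∧ q ∈ L} = Λ

namespace IsTwoDesign

variable {α : Type*} [DecidableEq α] {𝓛 : Finset (Finset α)} {k Λ : ℕ}

theorem of_existsUnique_block (hblock : ∀ L ∈ 𝓛, #L = k)
    (hpair : ∀ p q : α, p ≠ q → ∃! L, L ∈ 𝓛 ∧ p ∈ L ∧ q ∈ L) : IsTwoDesign 𝓛 k 1 :=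
  ⟨hblock, fun p q hpq =>
    card_eq_one_iff_existsUnique.2 (by simpa only [mem_filter] using hpair p q hpq)⟩

variable [Fintype α]

theorem card_blocks_through_mul (h : IsTwoDesign 𝓛 k Λ) (p : α) :
    #{L ∈ 𝓛 | p ∈ L} * (k - 1) = (Fintype.card α - 1) * Λ := by
  have hblock : ∀ L ∈ {L ∈ 𝓛 | p ∈ L}, #{q ∈ univ.erase p | q ∈ L} = k - 1 := fun L hL => by
    obtain ⟨hL, hp⟩ := mem_filter.1 hL
    rw [← h.card_block L hL, ← card_erase_of_mem hp]
    congr 1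
    ext q
    simp
  have hpoint : ∀ q ∈ univ.erase p, #{L ∈ {L ∈ 𝓛 | p ∈ L} | q ∈ L} = Λ := fun q hq => by
    rw [filter_filter, h.card_blocks_through_pair p q (ne_of_mem_erase hq).symm]
  calc #{L ∈ 𝓛 | p ∈ L} * (k - 1)
      = ∑ L ∈ 𝓛 with p ∈ L, #{q ∈ univ.erase p | q ∈ L} := (sum_const_nat hblock).symm
    _ = ∑ q ∈ univ.erase p, #{L ∈ {L ∈ 𝓛 | p ∈ L} | q ∈ L} :=
      (sum_card_bipartiteAbove_eq_sum_card_bipartiteBelow (fun q L => q ∈ L)).symm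
    _ = (Fintype.card α - 1) * Λ := by
      rw [sum_const_nat hpoint, card_erase_of_mem (mem_univ p), card_univ]

theorem isPartialGeometricDesign (h : IsTwoDesign 𝓛 k Λ) {r : ℕ}
    (hr : ∀ p, #{L ∈ 𝓛 | p ∈ L} = r) :
    IsPartialGeometricDesign 𝓛 k r (r + (k - 1) * Λ) (k * Λ) := by
  have hsum (p : α) (L : Finset α) :
      #{x ∈ flags 𝓛 | x.1 ∈ L ∧ p ∈ x.2} = ∑ q ∈ L, #{M ∈ 𝓛 | q ∈ M ∧ p ∈ M} := by
    rw [card_filter_flags_eq_sum_points (· ∈ L) (p ∈ ·), filter_univ_mem]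
  have hpair (p : α) (L : Finset α) : ∀ q ∈ L.erase p, #{M ∈ 𝓛 | q ∈ M ∧ p ∈ M} = Λ :=
    fun q hq => h.card_blocks_through_pair q p (ne_of_mem_erase hq)
  refine ⟨h.card_block, hr, fun p L hL hp => ?_, fun p L hL hp => ?_⟩
  · rw [hsum, ← add_sum_erase L _ hp, sum_const_nat (hpair p L), card_erase_of_mem hp,
      h.card_block L hL]
    simp only [and_self, hr]
  · have hpairL := hpair p L
    rw [erase_eq_of_notMem hp] at hpairL
    rw [hsum, sum_const_nat hpairL, h.card_block L hL]

theorem card_blocks_through_of_projective {n : ℕ} (h : IsTwoDesign 𝓛 (n + 1) 1) (hn : 0 < n)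
    (hcard : Fintype.card α = n ^ 2 + n + 1) (p : α) : #{L ∈ 𝓛 | p ∈ L} = n + 1 := by
  have hmul := h.card_blocks_through_mul p
  rw [hcard, Nat.add_sub_cancel, Nat.add_sub_cancel] at hmul
  exact Nat.eq_of_mul_eq_mul_right hn (by linarith)

theorem isPartialGeometricDesign_of_projective {n : ℕ} (h : IsTwoDesign 𝓛 (n + 1) 1)
    (hn : 0 < n) (hcard : Fintype.card α = n ^ 2 + n + 1) :
    IsPartialGeometricDesign 𝓛 (n + 1) (n + 1) (2 * n + 1) (n + 1) := by
  convert h.isPartialGeometricDesign (h.card_blocks_through_of_projective hn hcard) using 1 <;> lia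

end IsTwoDesign

section Puncture

variable {α : Type*} [DecidableEq α] {𝓛 : Finset (Finset α)}

/-- The vertices of `D₂`: the pairs `(p, L \ {p})` for a block `L` through `p`. -/
abbrev PuncturedFlag (𝓛 : Finset (Finset α)) :=
  {x : α × Finset α // ∃ L ∈ 𝓛, x.1 ∈ L ∧ x.2 = L \ {x.1}}

/-- The adjacency relation of `D₂`. -/
abbrev PuncturedFlag.Adj (x y : PuncturedFlag 𝓛) : Prop :=
  x.1.1 ∈ y.1.2 ∨ (x.1.1 = y.1.1 ∧ x.1.2 ≠ y.1.2)

variable [Fintype α]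

/-- Puncturing the block of a flag at its point; filling in the point undoes it. -/
def puncture (𝓛 : Finset (Finset α)) : {x // x ∈ flags 𝓛} ≃ PuncturedFlag 𝓛 where
  toFun x := ⟨(x.1.1, x.1.2 \ {x.1.1}), x.1.2, (mem_flags.1 x.2).1, (mem_flags.1 x.2).2, rfl⟩
  invFun x := ⟨(x.1.1, insert x.1.1 x.1.2), by
    obtain ⟨L, hL, hp, hB⟩ := x.2
    rw [hB, ← erase_eq, insert_erase hp]
    exact mem_flags.2 ⟨hL, hp⟩⟩
  left_inv := by
    rintro ⟨⟨p, L⟩, h⟩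
    have hp : p ∈ L := (mem_flags.1 h).2
    simp [← erase_eq, insert_erase hp]
  right_inv := by
    rintro ⟨⟨p, B⟩, L, hL, hp, rfl : B = L \ {p}⟩
    simp only [← erase_eq, insert_erase hp]

theorem adj_puncture_iff (x y : {x // x ∈ flags 𝓛}) :
    (puncture 𝓛 x).Adj (puncture 𝓛 y) ↔ x.1.1 ∈ y.1.2 ∧ x ≠ y := by
  have hmem : x.1.1 ∈ (puncture 𝓛 y).1.2 ↔ x.1.1 ∈ y.1.2 ∧ x.1.1 ≠ y.1.1 := by
    simp [puncture]
  have hne : (x.1.1 = y.1.1 ∧ (puncture 𝓛 x).1.2 ≠ (puncture 𝓛 y).1.2) ↔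
      x.1.1 = y.1.1 ∧ x ≠ y := by
    refine and_congr_right fun hpt => ?_
    rw [← (puncture 𝓛).injective.ne_iff, ne_eq, ne_eq, Subtype.ext_iff, Prod.ext_iff]
    exact (and_iff_right hpt).symm.not
  have hy : y.1.1 ∈ y.1.2 := (mem_flags.1 y.2).2
  refine (or_congr hmem hne).trans ?_
  grind

end Puncture

end BlockDesign

theorem projective_plane_D2_dsrg_general {α : Type} [Fintype α] [DecidableEq α]
    {𝓛 : Finset (Finset α)} {k r β γ : ℕ}
    (h : BlockDesign.IsPartialGeometricDesign 𝓛 k r β γ) :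
    IsDSRG (BlockDesign.PuncturedFlag.Adj (𝓛 := 𝓛))
      (Fintype.card α * r) (k * r - 1) (β - 1) (β - 2) γ :=
  h.isDSRG_flags.of_relIso
    ⟨BlockDesign.puncture 𝓛, BlockDesign.adj_puncture_iff _ _⟩

/-- **Projective-plane instance, second graph `D₂`.**  Let `(P, 𝓛)` be a projective
plane of order `n ≥ 2` (a `2-(n²+n+1, n+1, 1)` design): `P` has `n² + n + 1`
points, each line has `n + 1` points, and each pair of distinct points lies on
exactly one line.  The blocks of `𝓑_p` are the punctured lines `L \ {p}` for the
lines `L` through `p`.  The vertices are the pairs `(p, B)` with `B ∈ 𝓑_p`, and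
`(p,B) → (p',B')` iff `p ∈ B'`, or `p = p'` and `B ≠ B'`.  This directed graph is
a DSRG with parameters `((n+1)(n² + n + 1), n(n+2), 2n, 2n − 1, n + 1)`. -/
theorem projective_plane_D2_dsrg
    {α : Type} [Fintype α] [DecidableEq α]
    (n : ℕ) (hn : 2 ≤ n)
    (hcard : Fintype.card α = n ^ 2 + n + 1)
    (𝓛 : Finset (Finset α))
    (hline : ∀ L ∈ 𝓛, L.card = n + 1)
    (hpair : ∀ p q : α, p ≠ q → ∃! L, L ∈ 𝓛 ∧ p ∈ L ∧ q ∈ L) :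
    IsDSRG (V := {x : α × Finset α // ∃ L ∈ 𝓛, x.1 ∈ L ∧ x.2 = L \ {x.1}})
      (fun x y => x.1.1 ∈ y.1.2 ∨ (x.1.1 = y.1.1 ∧ x.1.2 ≠ y.1.2))
      ((n + 1) * (n ^ 2 + n + 1)) (n * (n + 2)) (2 * n) (2 * n - 1) (n + 1) := by
  have hdesign := BlockDesign.IsTwoDesign.of_existsUnique_block hline hpair
  convert projective_plane_D2_dsrg_general
    (hdesign.isPartialGeometricDesign_of_projective (by lia) hcard) using 1 <;> grind
end
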